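/- arXiv:1004.5237 — 10 statements merged into one kernel-verified Lean document; each statement's English description precedes it below -/
import Mathlib

section
/- Let α₀ = −1, let a ≠ 0 and λ ∈ ℝ with sin λ ≠ 0, and define U₀(Y) = a·sin(Y−1+λ) and V₁(X,Y) = sin X · Y. Then: (i) ΔV₁ = −V₁ on ℝ²; (ii) V₁(X,0) = 0 for all X; (iii) U₀″ = −U₀; and (iv) the surface boundary condition (1 + U₀(1)·U₀′(1))·V₁(X,1) = U₀(1)²·∂_Y V₁(X,1) holds for all X if and only if a²·sin²λ·(1 − cot λ) = 1. -/
/-!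
Everything is direct differentiation. For the surface condition, `U₀ 1 = a sin λ` and
`U₀' 1 = a cos λ`, and both sides carry the factor `sin X`, since `V₁ (X, 1) = ∂_Y V₁ (X, 1) = sin X`.
The condition for all `X` is therefore the scalar equation
`1 + a² sin λ cos λ = a² sin² λ`, which for `sin λ ≠ 0` is the one written with `cot λ`.
-/

/-- Partial derivative in the first (horizontal, `X`) variable. -/
noncomputable def pdX (f : ℝ × ℝ → ℝ) (p : ℝ × ℝ) : ℝ :=
  deriv (fun x => f (x, p.2)) p.1

/-- Partial derivative in the second (vertical, `Y`) variable. -/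
noncomputable def pdY (f : ℝ × ℝ → ℝ) (p : ℝ × ℝ) : ℝ :=
  deriv (fun y => f (p.1, y)) p.2

/-- The two-dimensional Laplacian `Δ = ∂ₓₓ + ∂_YY`. -/
noncomputable def lap (f : ℝ × ℝ → ℝ) (p : ℝ × ℝ) : ℝ :=
  pdX (pdX f) p + pdY (pdY f) p

/-- Wave class 2 (laminar vorticity `α₀ = -1`): the ansatz
`V₁(X,Y) = sin X · Y` solves the linearized problem, with the surface boundary
condition holding iff the bifurcation condition `a²·sin²λ·(1 − cot λ) = 1` does. -/
theorem wave_class_two (a lam : ℝ) (ha : a ≠ 0) (hlam : Real.sin lam ≠ 0)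
    (U₀ : ℝ → ℝ) (hU₀ : U₀ = fun Y => a * Real.sin (Y - 1 + lam))
    (V₁ : ℝ × ℝ → ℝ) (hV₁ : V₁ = fun p => Real.sin p.1 * p.2) :
    (∀ p : ℝ × ℝ, lap V₁ p = -V₁ p) ∧
    (∀ X : ℝ, V₁ (X, 0) = 0) ∧
    (∀ Y : ℝ, deriv (deriv U₀) Y = -U₀ Y) ∧
    ((∀ X : ℝ, (1 + U₀ 1 * deriv U₀ 1) * V₁ (X, 1) = (U₀ 1) ^ 2 * pdY V₁ (X, 1)) ↔
      a ^ 2 * Real.sin lam ^ 2 * (1 - Real.cot lam) = 1) := by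
  have hdU : deriv U₀ = fun Y => a * Real.cos (Y - 1 + lam) := by
    funext Y
    simp [hU₀]
  have hdX : pdX V₁ = fun p => Real.cos p.1 * p.2 := by
    funext p
    simp [hV₁, pdX]
  have hdY : pdY V₁ = fun p => Real.sin p.1 := by
    funext p
    simp [hV₁, pdY]
  refine ⟨fun p => ?_, fun X => by simp [hV₁], fun Y => ?_, ?_⟩
  · rw [lap, hdX, hdY, hV₁]
    simp [pdX, pdY]
  · rw [hdU]
    simp [hU₀]
  · have hcot : a ^ 2 * Real.sin lam ^ 2 * (1 - Real.cot lam)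
        = (a * Real.sin lam) ^ 2 - a * Real.sin lam * (a * Real.cos lam) := by
      rw [Real.cot_eq_cos_div_sin]
      field_simp
    have hU1 : U₀ 1 = a * Real.sin lam := by simp [hU₀]
    have hdU1 : deriv U₀ 1 = a * Real.cos lam := by simp [hdU]
    rw [hcot, hU1, hdU1, hdY, hV₁]
    constructor
    · intro h
      -- At `X = π / 2` the common factor `sin X` equals `1`.
      have h1 := h (Real.pi / 2)
      simp only [Real.sin_pi_div_two] at h1
      linarith
    · intro h X
      dsimp only
      linear_combination -Real.sin X * h
end

section
/- Let −1 < α₀ < 0, set θ₀ = √(−α₀) and θ₁ = √(α₀+1), let a ≠ 0 and λ ∈ ℝ with sin λ ≠ 0, and define U₀(Y) = a·sin(θ₀(Y−1)+λ) and V₁(X,Y) = sin X · sinh(θ₁Y). Then: (i) ΔV₁ = α₀·V₁ on ℝ²; (ii) V₁(X,0) = 0 for all X; (iii) U₀″ = α₀·U₀; and (iv) the surface boundary condition (1 + U₀(1)·U₀′(1))·V₁(X,1) = U₀(1)²·∂_Y V₁(X,1) holds for all X if and only if a²·sin²λ·(θ₁·coth θ₁ − θ₀·cot λ) = 1. -/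
/-- The hyperbolic cotangent. -/
noncomputable def coth (x : ℝ) : ℝ := Real.cosh x / Real.sinh x

theorem deriv_const_mul_sinh (b c : ℝ) :
    deriv (fun y => b * Real.sinh (c * y)) = fun y => b * c * Real.cosh (c * y) := by
  funext y
  have h := (((hasDerivAt_id y).const_mul c).sinh).const_mul b
  simp only [id] at h
  rw [h.deriv]; ring

theorem deriv_const_mul_cosh (b c : ℝ) :
    deriv (fun y => b * Real.cosh (c * y)) = fun y => b * c * Real.sinh (c * y) := by
  funext y
  have h := (((hasDerivAt_id y).const_mul c).cosh).const_mul b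
  simp only [id] at h
  rw [h.deriv]; ring

theorem deriv_const_mul_sin_shift (b c d : ℝ) :
    deriv (fun y => b * Real.sin (c * (y - 1) + d))
      = fun y => b * c * Real.cos (c * (y - 1) + d) := by
  funext y
  have h := (((((hasDerivAt_id y).sub_const 1).const_mul c).add_const d).sin).const_mul b
  simp only [id] at h
  rw [h.deriv]; ring

theorem deriv_const_mul_cos_shift (b c d : ℝ) :
    deriv (fun y => b * Real.cos (c * (y - 1) + d))
      = fun y => -(b * c) * Real.sin (c * (y - 1) + d) := by
  funext y
  have h := (((((hasDerivAt_id y).sub_const 1).const_mul c).add_const d).cos).const_mul b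
  simp only [id] at h
  rw [h.deriv]; ring

/-- Wave class 3 (laminar vorticity `-1 < α₀ < 0`): the ansatz
`V₁(X,Y) = sin X · sinh(θ₁ Y)` solves the linearized problem, with the surface
boundary condition holding iff the bifurcation condition
`a²·sin²λ·(θ₁ coth θ₁ − θ₀ cot λ) = 1` does. -/
theorem wave_class_three (α₀ : ℝ) (hα : -1 < α₀) (hα' : α₀ < 0)
    (θ₀ θ₁ : ℝ) (hθ₀ : θ₀ = Real.sqrt (-α₀)) (hθ₁ : θ₁ = Real.sqrt (α₀ + 1))
    (a lam : ℝ) (ha : a ≠ 0) (hlam : Real.sin lam ≠ 0)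
    (U₀ : ℝ → ℝ) (hU₀ : U₀ = fun Y => a * Real.sin (θ₀ * (Y - 1) + lam))
    (V₁ : ℝ × ℝ → ℝ) (hV₁ : V₁ = fun p => Real.sin p.1 * Real.sinh (θ₁ * p.2)) :
    (∀ p : ℝ × ℝ, lap V₁ p = α₀ * V₁ p) ∧
    (∀ X : ℝ, V₁ (X, 0) = 0) ∧
    (∀ Y : ℝ, deriv (deriv U₀) Y = α₀ * U₀ Y) ∧
    ((∀ X : ℝ, (1 + U₀ 1 * deriv U₀ 1) * V₁ (X, 1) = (U₀ 1) ^ 2 * pdY V₁ (X, 1)) ↔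
      a ^ 2 * Real.sin lam ^ 2 * (θ₁ * coth θ₁ - θ₀ * Real.cot lam) = 1) := by
  have h0 : θ₀ ^ 2 = -α₀ := by rw [hθ₀]; exact Real.sq_sqrt (by linarith)
  have h1 : θ₁ ^ 2 = α₀ + 1 := by rw [hθ₁]; exact Real.sq_sqrt (by linarith)
  have h1pos : 0 < θ₁ := by rw [hθ₁]; exact Real.sqrt_pos.mpr (by linarith)
  have hsinh : Real.sinh θ₁ ≠ 0 := (Real.sinh_pos_iff.mpr h1pos).ne'
  have hdU : deriv U₀ = fun Y => a * θ₀ * Real.cos (θ₀ * (Y - 1) + lam) := by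
    rw [hU₀, deriv_const_mul_sin_shift]
  have hX : pdX V₁ = fun p => Real.cos p.1 * Real.sinh (θ₁ * p.2) := by
    funext p
    simp [pdX, hV₁]
  have hY : pdY V₁ = fun p => Real.sin p.1 * θ₁ * Real.cosh (θ₁ * p.2) := by
    funext p
    simp only [pdY, hV₁, deriv_const_mul_sinh]
  refine ⟨fun p => ?_, fun X => by simp [hV₁], fun Y => ?_, ?_⟩
  · have hXX : pdX (pdX V₁) p = -Real.sin p.1 * Real.sinh (θ₁ * p.2) := by
      rw [hX]
      simp [pdX]
    have hYY : pdY (pdY V₁) p = Real.sin p.1 * θ₁ * θ₁ * Real.sinh (θ₁ * p.2) := by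
      rw [hY]
      simp only [pdY, deriv_const_mul_cosh]
    rw [lap, hXX, hYY, hV₁]
    linear_combination Real.sin p.1 * Real.sinh (θ₁ * p.2) * h1
  · rw [hdU, deriv_const_mul_cos_shift, hU₀]
    linear_combination -(a * Real.sin (θ₀ * (Y - 1) + lam)) * h0
  · have hbif : a ^ 2 * Real.sin lam ^ 2 * (θ₁ * coth θ₁ - θ₀ * Real.cot lam) = 1 ↔
        (1 + a * Real.sin lam * (a * θ₀ * Real.cos lam)) * Real.sinh θ₁
          = (a * Real.sin lam) ^ 2 * (θ₁ * Real.cosh θ₁) := by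
      have hc : coth θ₁ * Real.sinh θ₁ = Real.cosh θ₁ := div_mul_cancel₀ _ hsinh
      have ht : Real.cot lam * Real.sin lam = Real.cos lam := by
        rw [Real.cot_eq_cos_div_sin]; exact div_mul_cancel₀ _ hlam
      rw [← hc, ← ht]
      constructor
      · intro h
        linear_combination -Real.sinh θ₁ * h
      · intro h
        apply mul_right_cancel₀ hsinh
        linear_combination -h
    rw [hbif, hdU, hY, hU₀, hV₁]
    simp only [sub_self, mul_zero, zero_add, mul_one]
    constructor
    · intro h
      -- At `X = π / 2` the common factor `sin X` equals `1`.
      simpa using h (Real.pi / 2)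
    · intro h X
      linear_combination Real.sin X * h
end

section
/- Let α₀ > 0, set θ₀ = √α₀ and θ₁ = √(α₀+1), let λ ≠ 0 and a ∈ ℝ, and define U₀(Y) = a·sinh(θ₀(Y−1)) + λ·cosh(θ₀(Y−1)) and V₁(X,Y) = sin X · sinh(θ₁Y). Then: (i) ΔV₁ = α₀·V₁ on ℝ²; (ii) V₁(X,0) = 0 for all X; (iii) U₀″ = α₀·U₀; and (iv) the surface boundary condition (1 + U₀(1)·U₀′(1))·V₁(X,1) = U₀(1)²·∂_Y V₁(X,1) holds for all X if and only if a = (λ²·θ₁·coth θ₁ − 1)/(λ·θ₀). -/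
/-- Differentiation of a hyperbolic profile `a sinh + b cosh` swaps the coefficients and multiplies
them by `t`; with `b = 0` or `a = 0` it also serves the vertical factor of the ansatz. -/
lemma deriv_hyperbolic (a b t c : ℝ) :
    deriv (fun y => a * Real.sinh (t * (y - c)) + b * Real.cosh (t * (y - c))) =
      fun y => (b * t) * Real.sinh (t * (y - c)) + (a * t) * Real.cosh (t * (y - c)) := by
  funext y
  have h : HasDerivAt (fun y : ℝ => t * (y - c)) t y := by
    simpa using ((hasDerivAt_id y).sub_const c).const_mul t
  refine ((h.sinh.const_mul a).add (h.cosh.const_mul b)).deriv.trans ?_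
  ring

lemma pdX_pdX_ansatz (t : ℝ) (p : ℝ × ℝ) :
    pdX (pdX fun q => Real.sin q.1 * Real.sinh (t * q.2)) p =
      -(Real.sin p.1 * Real.sinh (t * p.2)) := by
  simp [pdX]

lemma pdY_ansatz (t : ℝ) (p : ℝ × ℝ) :
    pdY (fun q => Real.sin q.1 * Real.sinh (t * q.2)) p =
      Real.sin p.1 * t * Real.cosh (t * p.2) := by
  simpa [pdY] using congrFun (deriv_hyperbolic (Real.sin p.1) 0 t 0) p.2

lemma pdY_pdY_ansatz (t : ℝ) (p : ℝ × ℝ) :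
    pdY (pdY fun q => Real.sin q.1 * Real.sinh (t * q.2)) p =
      t ^ 2 * (Real.sin p.1 * Real.sinh (t * p.2)) := by
  rw [funext (pdY_ansatz t)]
  have h := congrFun (deriv_hyperbolic 0 (Real.sin p.1 * t) t 0) p.2
  simp only [zero_mul, zero_add, sub_zero, add_zero] at h
  simp only [pdY]
  rw [h]
  ring

/-- Wave class 4 (laminar vorticity `α₀ > 0`): the ansatz
`V₁(X,Y) = sin X · sinh(θ₁ Y)` solves the linearized problem, with the surface
boundary condition holding iff the bifurcation condition
`a = (λ²·θ₁·coth θ₁ − 1)/(λ·θ₀)` does. -/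
theorem wave_class_four (α₀ : ℝ) (hα : 0 < α₀)
    (θ₀ θ₁ : ℝ) (hθ₀ : θ₀ = Real.sqrt α₀) (hθ₁ : θ₁ = Real.sqrt (α₀ + 1))
    (a lam : ℝ) (hlam : lam ≠ 0)
    (U₀ : ℝ → ℝ)
    (hU₀ : U₀ = fun Y => a * Real.sinh (θ₀ * (Y - 1)) + lam * Real.cosh (θ₀ * (Y - 1)))
    (V₁ : ℝ × ℝ → ℝ) (hV₁ : V₁ = fun p => Real.sin p.1 * Real.sinh (θ₁ * p.2)) :
    (∀ p : ℝ × ℝ, lap V₁ p = α₀ * V₁ p) ∧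
    (∀ X : ℝ, V₁ (X, 0) = 0) ∧
    (∀ Y : ℝ, deriv (deriv U₀) Y = α₀ * U₀ Y) ∧
    ((∀ X : ℝ, (1 + U₀ 1 * deriv U₀ 1) * V₁ (X, 1) = (U₀ 1) ^ 2 * pdY V₁ (X, 1)) ↔
      a = (lam ^ 2 * θ₁ * coth θ₁ - 1) / (lam * θ₀)) := by
  have hpos₀ : 0 < θ₀ := hθ₀ ▸ Real.sqrt_pos.2 hα
  have hpos₁ : 0 < θ₁ := hθ₁ ▸ Real.sqrt_pos.2 (by linarith)
  have hsq₀ : θ₀ ^ 2 = α₀ := by rw [hθ₀, Real.sq_sqrt hα.le]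
  have hsq₁ : θ₁ ^ 2 = α₀ + 1 := by rw [hθ₁, Real.sq_sqrt (by linarith)]
  subst hU₀ hV₁
  refine ⟨fun p => ?_, fun X => by simp, fun Y => ?_, ?_⟩
  · rw [lap, pdX_pdX_ansatz, pdY_pdY_ansatz, hsq₁]
    ring
  · rw [deriv_hyperbolic, deriv_hyperbolic, ← hsq₀]
    ring
  · have hsinh : Real.sinh θ₁ ≠ 0 := (Real.sinh_pos_iff.2 hpos₁).ne'
    have hθ₀_ne : θ₀ ≠ 0 := hpos₀.ne'
    -- The boundary condition with the factor `sin X` removed.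
    have key : (1 + lam * (a * θ₀)) * Real.sinh θ₁ = lam ^ 2 * (θ₁ * Real.cosh θ₁) ↔
        a = (lam ^ 2 * θ₁ * coth θ₁ - 1) / (lam * θ₀) := by
      rw [eq_div_iff (mul_ne_zero hlam hθ₀_ne), eq_sub_iff_add_eq, coth, ← mul_div_assoc,
        eq_div_iff hsinh]
      constructor <;> intro h <;> linear_combination h
    rw [← key]
    simp only [deriv_hyperbolic, pdY_ansatz, sub_self, mul_zero, Real.sinh_zero, Real.cosh_zero,
      mul_one, zero_add]
    constructor
    · intro h
      have h1 := h (Real.pi / 2)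
      rw [Real.sin_pi_div_two] at h1
      linear_combination h1
    · intro h X
      linear_combination Real.sin X * h
end

section
/- For every c ∈ ℝ there exists α₀ < −1 such that, setting θ₀ = √(−α₀) and θ₁ = √(−α₀−1), one has sin θ₁ ≠ 0 and θ₁·cos θ₁/(θ₀·sin θ₁) = c. In other words, the function α₀ ↦ θ₁·cot θ₁/θ₀, defined for α₀ < −1 with sin θ₁ ≠ 0, attains every real value. -/
/-!
With `x = θ₁ > 0` one has `α₀ = -(x² + 1)` and `θ₀ = √(x² + 1)`. Clearing the denominator, the
equation becomes `x cos x - c √(x² + 1) sin x = 0`. The left-hand side is continuous and equals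
`-π` at `π` and `2π` at `2π`, whatever `c` is, so by the intermediate value theorem it vanishes at
some `x ∈ [π, 2π]`. There `sin x ≠ 0`, since otherwise `cos x` would vanish too.
-/

/-- The function `α₀ ↦ θ₁ cot θ₁ / θ₀` (with `θ₀ = √(−α₀)`, `θ₁ = √(−α₀−1)`),
defined for `α₀ < −1` with `sin θ₁ ≠ 0`, attains every real value. -/
theorem theta_cot_surjective (c : ℝ) :
    ∃ α₀ : ℝ, α₀ < -1 ∧
      Real.sin (Real.sqrt (-α₀ - 1)) ≠ 0 ∧
      Real.sqrt (-α₀ - 1) * Real.cos (Real.sqrt (-α₀ - 1)) /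
        (Real.sqrt (-α₀) * Real.sin (Real.sqrt (-α₀ - 1))) = c := by
  have hpi := Real.pi_pos
  have hcont : ContinuousOn
      (fun x : ℝ => x * Real.cos x - c * (Real.sqrt (x ^ 2 + 1) * Real.sin x))
      (Set.Icc Real.pi (2 * Real.pi)) := by fun_prop
  obtain ⟨x, ⟨hx, -⟩, hzero⟩ := intermediate_value_Icc (by linarith) hcont
    (show (0 : ℝ) ∈ Set.Icc _ _ by constructor <;> simp <;> linarith)
  have hx0 : 0 < x := by linarith
  have hsin : Real.sin x ≠ 0 := by
    intro hs
    have hcos : Real.cos x = 0 := by simpa [hs, hx0.ne'] using hzero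
    simpa [hs, hcos] using Real.sin_sq_add_cos_sq x
  have hsqrt : Real.sqrt (x ^ 2 + 1) ≠ 0 := by positivity
  have h₀ : -(-(x ^ 2 + 1)) = x ^ 2 + 1 := neg_neg _
  have h₁ : Real.sqrt (x ^ 2 + 1 - 1) = x := by
    rw [add_sub_cancel_right, Real.sqrt_sq hx0.le]
  refine ⟨-(x ^ 2 + 1), by nlinarith, ?_⟩
  rw [h₀, h₁]
  exact ⟨hsin, (div_eq_iff (mul_ne_zero hsqrt hsin)).2 (sub_eq_zero.1 hzero)⟩
end

section
/- For every natural number N there exist α₀ < −1, λ ∈ (0, π), and a ≠ 0 such that, setting θ₀ = √(−α₀) and θ₁ = √(−α₀−1), the bifurcation condition a²·sin²λ·(θ₁·cot θ₁ − θ₀·cot λ) = 1 holds and the background current U₀(Y) = a·sin(θ₀(Y−1)+λ) has at least N distinct zeros in the interval [0,1]. -/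
/-! If `θ₁ = π/2 + Nπ` then `cot θ₁ = 0`, and with `λ = 3π/4` (so `cot λ = -1`, `sin² λ = 1/2`)
the bifurcation condition reduces to `a² θ₀ / 2 = 1`, solved by `a = √(2/θ₀)`.
Since `θ₀ > θ₁ ≥ Nπ`, the points `Y = 1 - (λ + kπ)/θ₀`, `k < N`, are distinct zeros in `[0,1]`. -/


/-- Wave class 1 (laminar vorticity `α₀ < −1`) admits background currents with
arbitrarily many zeros — hence critical layers — in `[0,1]`: for every `N` there
are `α₀ < −1`, `λ ∈ (0,π)` and `a ≠ 0` satisfying the bifurcation condition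
such that `U₀(Y) = a·sin(θ₀(Y−1)+λ)` has at least `N` distinct zeros in `[0,1]`. -/
theorem arbitrarily_many_critical_layers (N : ℕ) :
    ∃ α₀ lam a : ℝ, α₀ < -1 ∧ lam ∈ Set.Ioo 0 Real.pi ∧ a ≠ 0 ∧
      a ^ 2 * Real.sin lam ^ 2 *
        (Real.sqrt (-α₀ - 1) * Real.cot (Real.sqrt (-α₀ - 1)) -
          Real.sqrt (-α₀) * Real.cot lam) = 1 ∧
      ∃ S : Finset ℝ, N ≤ S.card ∧
        ∀ Y ∈ S, Y ∈ Set.Icc (0:ℝ) 1 ∧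
          a * Real.sin (Real.sqrt (-α₀) * (Y - 1) + lam) = 0 := by
  obtain ⟨t, ht⟩ : ∃ t : ℝ, t = Real.pi / 2 + N * Real.pi := ⟨_, rfl⟩
  have hpi := Real.pi_pos
  have hN : (0 : ℝ) ≤ N * Real.pi := by positivity
  have ht0 : 0 < t := by linarith
  have h1 : Real.sqrt (-(-(t ^ 2 + 1)) - 1) = t := by
    rw [show -(-(t ^ 2 + 1)) - 1 = t ^ 2 by ring]
    exact Real.sqrt_sq ht0.le
  obtain ⟨s, hs⟩ : ∃ s : ℝ, s = Real.sqrt (-(-(t ^ 2 + 1))) := ⟨_, rfl⟩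
  have hst : t ≤ s := by
    rw [hs]
    exact Real.le_sqrt_of_sq_le (by linarith)
  have hs0 : 0 < s := by linarith
  have hcot : Real.cot t = 0 := by
    rw [Real.cot_eq_cos_div_sin, ht, Real.cos_add_nat_mul_pi, Real.cos_pi_div_two]
    simp
  have hlam : 3 * Real.pi / 4 = Real.pi - Real.pi / 4 := by ring
  have hsin : Real.sin (3 * Real.pi / 4) = Real.sqrt 2 / 2 := by
    rw [hlam, Real.sin_pi_sub, Real.sin_pi_div_four]
  have hcos : Real.cos (3 * Real.pi / 4) = -(Real.sqrt 2 / 2) := by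
    rw [hlam, Real.cos_pi_sub, Real.cos_pi_div_four]
  have hcotl : Real.cot (3 * Real.pi / 4) = -1 := by
    rw [Real.cot_eq_cos_div_sin, hsin, hcos, neg_div, div_self (by positivity)]
  refine ⟨-(t ^ 2 + 1), 3 * Real.pi / 4, Real.sqrt (2 / s), by nlinarith,
    ⟨by linarith, by linarith⟩, by positivity, ?_, ?_⟩
  · rw [h1, ← hs, hcot, hcotl, hsin, Real.sq_sqrt (by positivity), div_pow,
      Real.sq_sqrt (by norm_num)]
    field_simp
    norm_num
  · rw [← hs]
    refine ⟨(Finset.range N).image (fun k : ℕ => 1 - (3 * Real.pi / 4 + k * Real.pi) / s),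
      ?_, ?_⟩
    · rw [Finset.card_image_of_injective, Finset.card_range]
      intro j k hjk
      have h : (j : ℝ) = k := by
        simpa [hs0.ne', hpi.ne', div_left_inj'] using hjk
      exact_mod_cast h
    · intro Y hY
      obtain ⟨k, hk, rfl⟩ := Finset.mem_image.mp hY
      have hk' : (k : ℝ) + 1 ≤ N := by exact_mod_cast Finset.mem_range.mp hk
      have hk0 : (0 : ℝ) ≤ k * Real.pi := by positivity
      have hle : 3 * Real.pi / 4 + k * Real.pi ≤ s := by nlinarith
      refine ⟨⟨?_, ?_⟩, ?_⟩
      · rw [sub_nonneg]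
        exact (div_le_one hs0).mpr hle
      · rw [sub_le_self_iff]
        positivity
      · rw [show s * (1 - (3 * Real.pi / 4 + k * Real.pi) / s - 1) + 3 * Real.pi / 4
            = -(k * Real.pi) by field_simp; ring, Real.sin_neg, Real.sin_nat_mul_pi]
        simp
end

section
/- Let −1−π² < α₀ < −1, set θ₀ = √(−α₀) and θ₁ = √(−α₀−1), and let λ ∈ (0, π) satisfy the admissibility condition θ₁·cot θ₁ − θ₀·cot λ > 0 (and sin θ₁ ≠ 0). Let a ≠ 0 and define U₀(Y) = a·sin(θ₀(Y−1)+λ). If λ ≤ θ₀, then U₀ has exactly one zero in [0,1], namely Y₀ = 1 − λ/θ₀; if λ > θ₀, then U₀ has no zero in [0,1]. -/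
/-! The phase `θ₀ (Y - 1) + λ` increases from `λ - θ₀` to `λ < π` as `Y` runs over `[0, 1]`, so
the claim amounts to `λ - θ₀ > -π`: then `0` is the only zero of the sine that the phase can meet.
This bound is where admissibility enters (`lt_pi_add_of_admissible`). If `θ₀ ≥ π + λ`, then
`θ₁ = √(θ₀² - 1)` lies in `(π/2, π)`, so `θ₁ cot θ₁ < 0`, while `λ ≤ θ₀ - π < √(1 + π²) - π < π/2`
gives `θ₀ cot λ > 0`, contradicting `θ₁ cot θ₁ - θ₀ cot λ > 0`. -/

open Real in
/-- Admissibility keeps the phase at the bed, `l - t₀`, above `-π`. -/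
lemma lt_pi_add_of_admissible {t₀ t₁ l : ℝ} (h₀ : 0 < t₀) (h₁ : 0 < t₁) (h₁π : t₁ < π)
    (hrel : t₀ ^ 2 = t₁ ^ 2 + 1) (hl : 0 < l) (hadm : 0 < t₁ * cot t₁ - t₀ * cot l) :
    t₀ < π + l := by
  by_contra! h
  have hπ := pi_gt_three
  have h₁' : π / 2 < t₁ := by nlinarith
  have h₀' : t₀ < 3 * π / 2 := by nlinarith
  have hc₁ : cot t₁ < 0 := by
    rw [cot_eq_cos_div_sin]
    exact div_neg_of_neg_of_pos (cos_neg_of_pi_div_two_lt_of_lt h₁' (by linarith))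
      (sin_pos_of_pos_of_lt_pi h₁ h₁π)
  have hcl : 0 < cot l := by
    rw [cot_eq_cos_div_sin]
    exact div_pos (cos_pos_of_mem_Ioo ⟨by linarith, by linarith⟩)
      (sin_pos_of_pos_of_lt_pi hl (by linarith))
  nlinarith [mul_pos h₀ hcl, mul_neg_of_pos_of_neg h₁ hc₁]

/-- Stagnation for wave class 1 in the range `−1−π² < α₀ < −1`: an admissible
background current `U₀(Y) = a·sin(θ₀(Y−1)+λ)` has exactly one zero
`Y₀ = 1 − λ/θ₀` in `[0,1]` when `λ ≤ θ₀`, and none when `λ > θ₀`. -/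
theorem stagnation_class_one (α₀ : ℝ) (hα : -1 - Real.pi ^ 2 < α₀) (hα' : α₀ < -1)
    (θ₀ θ₁ : ℝ) (hθ₀ : θ₀ = Real.sqrt (-α₀)) (hθ₁ : θ₁ = Real.sqrt (-α₀ - 1))
    (lam : ℝ) (hlam : lam ∈ Set.Ioo 0 Real.pi)
    (hsin : Real.sin θ₁ ≠ 0)
    (hadm : 0 < θ₁ * Real.cot θ₁ - θ₀ * Real.cot lam)
    (a : ℝ) (ha : a ≠ 0)
    (U₀ : ℝ → ℝ) (hU₀ : U₀ = fun Y => a * Real.sin (θ₀ * (Y - 1) + lam)) :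
    (lam ≤ θ₀ → ∀ Y ∈ Set.Icc (0:ℝ) 1, (U₀ Y = 0 ↔ Y = 1 - lam / θ₀)) ∧
    (θ₀ < lam → ∀ Y ∈ Set.Icc (0:ℝ) 1, U₀ Y ≠ 0) := by
  have h₁ : 0 < θ₁ := hθ₁ ▸ Real.sqrt_pos.mpr (by linarith)
  have h₀ : 0 < θ₀ := hθ₀ ▸ Real.sqrt_pos.mpr (by linarith)
  have hs₁ : θ₁ ^ 2 = -α₀ - 1 := by rw [hθ₁, Real.sq_sqrt (by linarith)]
  have hs₀ : θ₀ ^ 2 = -α₀ := by rw [hθ₀, Real.sq_sqrt (by linarith)]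
  have h₁π : θ₁ < Real.pi := by nlinarith [Real.pi_pos]
  obtain ⟨hl, hlπ⟩ := hlam
  have hlow := lt_pi_add_of_admissible h₀ h₁ h₁π (by linarith) hl hadm
  have key : ∀ Y ∈ Set.Icc (0:ℝ) 1, (U₀ Y = 0 ↔ θ₀ * (Y - 1) + lam = 0) := by
    rintro Y ⟨hY0, hY1⟩
    simp only [hU₀, mul_eq_zero, ha, false_or]
    exact Real.sin_eq_zero_iff_of_lt_of_lt (by nlinarith) (by nlinarith)
  refine ⟨fun _ Y hY => ?_, fun h Y hY hU => ?_⟩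
  · rw [key Y hY, eq_sub_iff_add_eq, ← sub_eq_zero (a := Y + lam / θ₀),
      show θ₀ * (Y - 1) + lam = θ₀ * (Y + lam / θ₀ - 1) by field_simp; ring,
      mul_eq_zero, or_iff_right h₀.ne']
  · have := (key Y hY).mp hU
    nlinarith [mul_nonneg h₀.le hY.1]
end

section
/- Let −1 < α₀ < 0, set θ₀ = √(−α₀) and θ₁ = √(α₀+1), and let λ ∈ (0, π) satisfy the admissibility condition θ₁·coth θ₁ − θ₀·cot λ > 0. Let a ≠ 0 and define U₀(Y) = a·sin(θ₀(Y−1)+λ). Then: (i) if λ ≤ θ₀, U₀ has exactly one zero in [0,1], namely Y₀ = 1 − λ/θ₀, and if λ > θ₀, U₀ has no zero in [0,1]; (ii) admissible λ with a zero exist, because arctan(θ₀/(θ₁·coth θ₁)) < θ₀, so every λ with arctan(θ₀/(θ₁·coth θ₁)) < λ ≤ θ₀ is admissible and yields a zero. -/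
/-- The inequality `tanh x < x` for `x > 0`, obtained from the mean value theorem for `sinh`
and the monotonicity of `cosh`. -/
lemma one_lt_mul_coth {x : ℝ} (hx : 0 < x) : 1 < x * coth x := by
  have hs : 0 < Real.sinh x := Real.sinh_pos_iff.2 hx
  obtain ⟨c, hc, h⟩ := exists_hasDerivAt_eq_slope Real.sinh Real.cosh hx
    Real.continuous_sinh.continuousOn (fun y _ => Real.hasDerivAt_sinh y)
  have hlt : Real.cosh c < Real.cosh x := by
    rw [Real.cosh_lt_cosh, abs_of_pos hc.1, abs_of_pos hx]
    exact hc.2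
  rw [h, Real.sinh_zero, sub_zero, sub_zero, div_lt_iff₀ hx] at hlt
  rw [coth, ← mul_div_assoc, one_lt_div hs]
  linarith

lemma arctan_lt_self {x : ℝ} (hx : 0 < x) : Real.arctan x < x := by
  have h := Real.lt_tan (Real.arctan_pos.2 hx) (Real.arctan_lt_pi_div_two x)
  rwa [Real.tan_arctan] at h

/-- Stagnation for wave class 3 (laminar vorticity `−1 < α₀ < 0`): an admissible
background current `U₀(Y) = a·sin(θ₀(Y−1)+λ)` has exactly one zero
`Y₀ = 1 − λ/θ₀` in `[0,1]` when `λ ≤ θ₀`, and none when `λ > θ₀`; moreover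
`arctan(θ₀/(θ₁ coth θ₁)) < θ₀`, and every `λ'` with
`arctan(θ₀/(θ₁ coth θ₁)) < λ' ≤ θ₀` is admissible and yields a zero. -/
theorem stagnation_class_three (α₀ : ℝ) (hα : -1 < α₀) (hα' : α₀ < 0)
    (θ₀ θ₁ : ℝ) (hθ₀ : θ₀ = Real.sqrt (-α₀)) (hθ₁ : θ₁ = Real.sqrt (α₀ + 1))
    (lam : ℝ) (hlam : lam ∈ Set.Ioo 0 Real.pi)
    (hadm : 0 < θ₁ * coth θ₁ - θ₀ * Real.cot lam)
    (a : ℝ) (ha : a ≠ 0)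
    (U₀ : ℝ → ℝ) (hU₀ : U₀ = fun Y => a * Real.sin (θ₀ * (Y - 1) + lam)) :
    ((lam ≤ θ₀ → ∀ Y ∈ Set.Icc (0:ℝ) 1, (U₀ Y = 0 ↔ Y = 1 - lam / θ₀)) ∧
     (θ₀ < lam → ∀ Y ∈ Set.Icc (0:ℝ) 1, U₀ Y ≠ 0)) ∧
    (Real.arctan (θ₀ / (θ₁ * coth θ₁)) < θ₀ ∧
     ∀ lam' : ℝ, Real.arctan (θ₀ / (θ₁ * coth θ₁)) < lam' → lam' ≤ θ₀ →
       0 < θ₁ * coth θ₁ - θ₀ * Real.cot lam' ∧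
       (1 - lam' / θ₀) ∈ Set.Icc (0:ℝ) 1 ∧
       Real.sin (θ₀ * ((1 - lam' / θ₀) - 1) + lam') = 0) := by
  have h0 : 0 < θ₀ := by rw [hθ₀]; exact Real.sqrt_pos.2 (by linarith)
  have h0' : θ₀ < 1 := by
    rw [hθ₀, Real.sqrt_lt' one_pos]; linarith
  have h1 : 0 < θ₁ := by rw [hθ₁]; exact Real.sqrt_pos.2 (by linarith)
  have hK : 1 < θ₁ * coth θ₁ := one_lt_mul_coth h1
  have hpi := Real.pi_gt_three
  have key : ∀ Y ∈ Set.Icc (0:ℝ) 1, (U₀ Y = 0 ↔ θ₀ * (Y - 1) + lam = 0) := by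
    intro Y hY
    have hlow : -θ₀ ≤ θ₀ * (Y - 1) := by nlinarith [hY.1]
    have hup : θ₀ * (Y - 1) ≤ 0 := by nlinarith [hY.2]
    rw [hU₀]
    simp only [mul_eq_zero, ha, false_or]
    exact Real.sin_eq_zero_iff_of_lt_of_lt (by linarith [hlam.1]) (by linarith [hlam.2])
  refine ⟨⟨fun _ Y hY => ?_, fun hlt Y hY h => ?_⟩, ?_, fun l hl hl' => ?_⟩
  · have e : θ₀ * (Y - 1) + lam = θ₀ * (Y - (1 - lam / θ₀)) := by
      field_simp
      ring
    rw [key Y hY, e, mul_eq_zero, or_iff_right h0.ne', sub_eq_zero]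
  · rw [key Y hY] at h
    nlinarith [hY.1]
  · exact (Real.arctan_strictMono (div_lt_self h0 hK)).trans (arctan_lt_self h0)
  · have hq : 0 < θ₀ / (θ₁ * coth θ₁) := div_pos h0 (by linarith)
    have hl0 : 0 < l := (Real.arctan_pos.2 hq).trans hl
    refine ⟨?_, ⟨?_, ?_⟩, ?_⟩
    · have ht := Real.tan_lt_tan_of_lt_of_lt_pi_div_two
        (Real.neg_pi_div_two_lt_arctan _) (by linarith) hl
      have hs : 0 < Real.sin l := Real.sin_pos_of_pos_of_lt_pi hl0 (by linarith)
      have hc : 0 < Real.cos l := Real.cos_pos_of_mem_Ioo ⟨by linarith, by linarith⟩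
      rw [Real.tan_arctan, Real.tan_eq_sin_div_cos, div_lt_div_iff₀ (by linarith) hc] at ht
      rw [sub_pos, Real.cot_eq_cos_div_sin, ← mul_div_assoc, div_lt_iff₀ hs]
      linarith
    · rw [sub_nonneg, div_le_one h0]
      exact hl'
    · linarith [div_pos hl0 h0]
    · have : θ₀ * ((1 - l / θ₀) - 1) + l = 0 := by
        field_simp
        ring
      rw [this, Real.sin_zero]
end

section
/- For α₀ > 0 set θ₀ = √α₀ and θ₁ = √(α₀+1), and define F(α₀) = 1 − θ₀⁻¹·artanh(θ₀/(θ₁·coth θ₁)). Then F is well defined (i.e. 0 < θ₀/(θ₁·coth θ₁) < 1 for all α₀ > 0), satisfies 0 < F(α₀) < 1, is strictly increasing in α₀ on (0,∞), and F(α₀) → 1 as α₀ → ∞. -/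
/-- The inverse hyperbolic tangent. -/
noncomputable def artanh (x : ℝ) : ℝ := (1 / 2) * Real.log ((1 + x) / (1 - x))

namespace Stagnation

open Real

lemma artanh_eq {x : ℝ} (h0 : 0 < x) (h1 : x < 1) : _root_.artanh x = Real.artanh x := by
  rw [Real.artanh_eq_half_log ⟨by linarith, h1.le⟩, _root_.artanh]

lemma hasDerivAt_artanh {x : ℝ} (h0 : -1 < x) (h1 : x < 1) :
    HasDerivAt _root_.artanh (1 / (1 - x ^ 2)) x := by
  have hp : (0 : ℝ) < 1 + x := by linarith
  have hm : (0 : ℝ) < 1 - x := by linarith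
  have hq : (1 + x) / (1 - x) ≠ 0 := (div_pos hp hm).ne'
  have h := ((((hasDerivAt_id x).const_add 1).div ((hasDerivAt_id x).const_sub 1) hm.ne').log
    hq).const_mul (1 / 2)
  refine h.congr_deriv ?_
  have hs : 1 - x ^ 2 ≠ 0 := by nlinarith
  simp only [id, Pi.div_apply]
  field_simp
  ring

/-- A lower bound by a Padé approximant, exact up to fourth order at the origin. -/
lemma artanh_gt {x : ℝ} (h0 : 0 < x) (h1 : x < 1) : 3 * x / (3 - x ^ 2) < _root_.artanh x := by
  have hd : ∀ y ∈ Set.Ico (0 : ℝ) 1, HasDerivAt (fun y => _root_.artanh y - 3 * y / (3 - y ^ 2))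
      (4 * y ^ 4 / ((1 - y ^ 2) * (3 - y ^ 2) ^ 2)) y := by
    intro y hy
    have h3 : 3 - y ^ 2 ≠ 0 := by nlinarith [hy.1, hy.2]
    have h4 : 1 - y ^ 2 ≠ 0 := by nlinarith [hy.1, hy.2]
    have h := (hasDerivAt_artanh (by linarith [hy.1]) hy.2).sub
      (((hasDerivAt_id y).const_mul 3).div (((hasDerivAt_id y).pow 2).const_sub 3) h3)
    refine h.congr_deriv ?_
    simp only [id, Pi.pow_apply]
    field_simp
    simp
    field_simp
    ring
  have hm : StrictMonoOn (fun y => _root_.artanh y - 3 * y / (3 - y ^ 2)) (Set.Ico (0 : ℝ) 1) := by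
    refine strictMonoOn_of_deriv_pos (convex_Ico 0 1)
      (fun y hy => (hd y hy).continuousAt.continuousWithinAt) fun y hy => ?_
    rw [interior_Ico] at hy
    rw [(hd y ⟨hy.1.le, hy.2⟩).deriv]
    have h3 : 0 < 3 - y ^ 2 := by nlinarith [hy.1, hy.2]
    have h4 : 0 < 1 - y ^ 2 := by nlinarith [hy.1, hy.2]
    have := hy.1
    positivity
  have := hm ⟨le_rfl, one_pos⟩ ⟨h0.le, h1⟩ h0
  simp [_root_.artanh] at this ⊢
  linarith

lemma nonneg_of_deriv {f f' : ℝ → ℝ} (hd : ∀ x, HasDerivAt f (f' x) x) (h0 : f 0 = 0)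
    (hf : ∀ x, 0 ≤ x → 0 ≤ f' x) {x : ℝ} (hx : 0 ≤ x) : 0 ≤ f x := by
  have hm : MonotoneOn f (Set.Ici 0) := by
    refine monotoneOn_of_deriv_nonneg (convex_Ici 0)
      (fun y _ => (hd y).continuousAt.continuousWithinAt)
      (fun y _ => (hd y).differentiableAt.differentiableWithinAt) fun y hy => ?_
    rw [interior_Ici] at hy
    rw [(hd y).deriv]
    exact hf y (le_of_lt hy)
  simpa [h0] using hm (Set.mem_Ici.2 le_rfl) (Set.mem_Ici.2 hx) hx

lemma sinh_le_mul_cosh {x : ℝ} (hx : 0 ≤ x) : sinh x ≤ x * cosh x := by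
  have := nonneg_of_deriv (f := fun x => x * cosh x - sinh x) (f' := fun x => x * sinh x)
    (fun x => (((hasDerivAt_id x).mul (hasDerivAt_cosh x)).sub (hasDerivAt_sinh x)).congr_deriv
      (by simp)) (by simp) (fun x hx => mul_nonneg hx (sinh_nonneg_iff.2 hx)) hx
  linarith

/-- The bound `x coth x ≤ 1 + x² / 3`, free of division. -/
lemma mul_cosh_le {x : ℝ} (hx : 0 ≤ x) : x * cosh x ≤ (1 + x ^ 2 / 3) * sinh x := by
  have := nonneg_of_deriv (f := fun x => (1 + x ^ 2 / 3) * sinh x - x * cosh x)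
    (f' := fun x => x / 3 * (x * cosh x - sinh x))
    (fun x => ((((((hasDerivAt_id x).pow 2).div_const 3).const_add 1).mul
      (hasDerivAt_sinh x)).sub ((hasDerivAt_id x).mul (hasDerivAt_cosh x))).congr_deriv
      (by simp; ring)) (by simp)
    (fun x hx => mul_nonneg (by positivity) (by linarith [sinh_le_mul_cosh hx])) hx
  linarith

lemma sinh_ge {x : ℝ} (hx : 0 ≤ x) : x + x ^ 3 / 6 ≤ sinh x := by
  have hc : ∀ x : ℝ, 0 ≤ x → 0 ≤ cosh x - (1 + x ^ 2 / 2) := fun x hx =>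
    nonneg_of_deriv (f := fun x => cosh x - (1 + x ^ 2 / 2)) (f' := fun x => sinh x - x)
      (fun x => ((hasDerivAt_cosh x).sub ((((hasDerivAt_id x).pow 2).div_const 2).const_add
        1)).congr_deriv (by simp)) (by simp)
      (fun x hx => sub_nonneg.2 (self_le_sinh_iff.2 hx)) hx
  have := nonneg_of_deriv (f := fun x => sinh x - (x + x ^ 3 / 6))
    (f' := fun x => cosh x - (1 + x ^ 2 / 2))
    (fun x => ((hasDerivAt_sinh x).sub ((hasDerivAt_id x).add
      (((hasDerivAt_id x).pow 3).div_const 6))).congr_deriv (by simp; ring)) (by simp) hc hx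
  linarith

/-- The polynomial core of the monotonicity, with `B = b²` and `u = sinh² b`. -/
lemma quad_pos {B u : ℝ} (hB : 1 < B) (hu : B * (1 + B / 6) ^ 2 ≤ u) :
    0 < u ^ 2 - B ^ 2 - 2 * B / 3 * (B - 1) * u := by
  set w := B * (1 + B / 6) ^ 2 with hw
  have hw0 : B ≤ w := by
    have : w - B = B * (B / 3 + B ^ 2 / 36) := by rw [hw]; ring
    have : 0 ≤ B * (B / 3 + B ^ 2 / 36) := by positivity
    linarith
  -- the quotient `(w - (2B/3)(B - 1)) / B` has negative discriminant
  have h1 : B * (2 / 3) ≤ w - 2 * B / 3 * (B - 1) := by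
    have : w - 2 * B / 3 * (B - 1) - B * (2 / 3) = B * (B / 6 - 1) ^ 2 := by rw [hw]; ring
    nlinarith [mul_nonneg (by linarith : (0 : ℝ) ≤ B) (sq_nonneg (B / 6 - 1))]
  have h2 : 0 < w * (w - 2 * B / 3 * (B - 1)) - B ^ 2 := by
    have : w * (w - 2 * B / 3 * (B - 1)) - B ^ 2
        = B ^ 2 * ((1 + B / 6) ^ 2 * (2 / 3 + (B / 6 - 1) ^ 2) - 1) := by rw [hw]; ring
    rw [this]
    have : 0 < (1 + B / 6) ^ 2 * (2 / 3 + (B / 6 - 1) ^ 2) - 1 := by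
      nlinarith [sq_nonneg ((B / 6) ^ 2 - 1), sq_nonneg (B / 6), sq_nonneg (B/6 - 1)]
    positivity
  nlinarith [mul_nonneg (sub_nonneg.2 hu) (by nlinarith : 0 ≤ u + w - 2 * B / 3 * (B - 1))]

/-- The inequality `G' < 0` after replacing `artanh r` by its lower bound `3r / (3 - r²)`, with
`a² = b² - 1` eliminated and denominators cleared. -/
lemma key {b : ℝ} (hb : 1 < b) :
    (sinh b * cosh b + (b ^ 2 - 1) * b) * (3 * b ^ 2 + (2 * b ^ 2 + 1) * sinh b ^ 2)
      < 3 * b ^ 2 * (sinh b * cosh b) * (b ^ 2 + sinh b ^ 2) := by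
  have hb0 : 0 < b := by linarith
  have hs : 0 < sinh b := sinh_pos_iff.2 hb0
  have hc : 0 < cosh b := cosh_pos b
  have hcs : cosh b ^ 2 = sinh b ^ 2 + 1 := by rw [cosh_sq]
  have h1 := mul_cosh_le hb0.le
  have h2 : b ^ 2 * (1 + b ^ 2 / 6) ^ 2 ≤ sinh b ^ 2 := by
    have := pow_le_pow_left₀ (by positivity) (sinh_ge hb0.le) 2
    calc _ = (b + b ^ 3 / 6) ^ 2 := by ring
      _ ≤ _ := this
  have hB : 1 < b ^ 2 := by nlinarith
  have h3 := quad_pos hB h2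
  generalize sinh b = s at *
  generalize cosh b = c at *
  have h4 : b * (1 + s ^ 2) ≤ (1 + b ^ 2 / 3) * (s * c) := by
    have := mul_le_mul_of_nonneg_right h1 hc.le
    nlinarith
  have h5 := mul_le_mul_of_nonneg_left h4
    (mul_nonneg (sub_nonneg.2 hB.le)
      (by positivity : 0 ≤ 3 * b ^ 2 + (2 * b ^ 2 + 1) * s ^ 2))
  have h6 : 0 < (s * c) * ((b ^ 2 - 1) * (((s ^ 2) ^ 2 - (b ^ 2) ^ 2
      - 2 * b ^ 2 / 3 * (b ^ 2 - 1) * s ^ 2))) :=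
    mul_pos (mul_pos hs hc) (mul_pos (by linarith) h3)
  have hu : 0 < 1 + s ^ 2 := by positivity
  refine lt_of_mul_lt_mul_right ?_ hu.le
  nlinarith

/-- The argument `θ₀ / (θ₁ coth θ₁)` as a function of `a = θ₀`. -/
noncomputable def r (a : ℝ) : ℝ :=
  a * sinh (√(a ^ 2 + 1)) / (√(a ^ 2 + 1) * cosh (√(a ^ 2 + 1)))

/-- The distance `1 - F` as a function of `a = θ₀`. -/
noncomputable def G (a : ℝ) : ℝ := _root_.artanh (r a) / a

lemma one_lt_b {a : ℝ} (ha : 0 < a) : 1 < √(a ^ 2 + 1) :=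
  Real.lt_sqrt_of_sq_lt (by nlinarith)

lemma a_lt_b (a : ℝ) : a < √(a ^ 2 + 1) := Real.lt_sqrt_of_sq_lt (by nlinarith)

lemma r_pos {a : ℝ} (ha : 0 < a) : 0 < r a := by
  have hb := one_lt_b ha
  have hs : 0 < sinh (√(a ^ 2 + 1)) := sinh_pos_iff.2 (by linarith)
  have hc := cosh_pos (√(a ^ 2 + 1))
  unfold r
  positivity

lemma r_lt {a : ℝ} (ha : 0 < a) : r a < a / √(a ^ 2 + 1) := by
  have hb := one_lt_b ha
  have hc := cosh_pos (√(a ^ 2 + 1))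
  unfold r
  rw [div_lt_div_iff₀ (by positivity) (by positivity)]
  nlinarith [sinh_lt_cosh (√(a ^ 2 + 1)),
    mul_pos (mul_pos ha (by positivity : 0 < √(a ^ 2 + 1)))
      (sub_pos.2 (sinh_lt_cosh (√(a ^ 2 + 1))))]

lemma r_lt_one {a : ℝ} (ha : 0 < a) : r a < 1 := by
  refine (r_lt ha).trans ?_
  rw [div_lt_one (by linarith [one_lt_b ha])]
  exact a_lt_b a

lemma hasDerivAt_G {a : ℝ} (ha : 0 < a) :
    HasDerivAt G ((a * (sinh (√(a ^ 2 + 1)) * cosh (√(a ^ 2 + 1)) / √(a ^ 2 + 1) + a ^ 2)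
      / (√(a ^ 2 + 1) ^ 2 + sinh (√(a ^ 2 + 1)) ^ 2) - _root_.artanh (r a)) / a ^ 2) a := by
  have hb := one_lt_b ha
  have hc := cosh_pos (√(a ^ 2 + 1))
  have hcs := cosh_sq (√(a ^ 2 + 1))
  have hb2 : √(a ^ 2 + 1) ^ 2 = a ^ 2 + 1 := Real.sq_sqrt (by positivity)
  have hr0 := r_pos ha
  have hr1 := r_lt_one ha
  have hbd : HasDerivAt (fun a : ℝ => √(a ^ 2 + 1)) (a / √(a ^ 2 + 1)) a := by
    refine ((((hasDerivAt_id a).pow 2).add_const 1).sqrt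
      (by simp only [id, Pi.pow_apply]; positivity)).congr_deriv ?_
    simp
    field_simp
  have hrd : HasDerivAt r ((sinh (√(a ^ 2 + 1)) * cosh (√(a ^ 2 + 1)) / √(a ^ 2 + 1) + a ^ 2)
      / (√(a ^ 2 + 1) * cosh (√(a ^ 2 + 1))) ^ 2) a := by
    refine (((hasDerivAt_id a).mul hbd.sinh).div (hbd.mul hbd.cosh)
      (by simp only [Pi.mul_apply]; positivity)).congr_deriv ?_
    simp only [id, Pi.mul_apply]
    generalize √(a ^ 2 + 1) = b at *
    generalize sinh b = s at *
    generalize cosh b = c at *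
    have hb0 : b ≠ 0 := by linarith
    congr 1
    field_simp
    -- both sides agree modulo `b² = a² + 1` and `c² = s² + 1`
    linear_combination (s * c) * hb2 + a ^ 2 * b * hcs
  have h := ((hasDerivAt_artanh (by linarith) hr1).comp a hrd).div (hasDerivAt_id a) ha.ne'
  refine h.congr_deriv ?_
  have h1r : 1 - r a ^ 2 = (√(a ^ 2 + 1) ^ 2 + sinh (√(a ^ 2 + 1)) ^ 2)
      / (√(a ^ 2 + 1) * cosh (√(a ^ 2 + 1))) ^ 2 := by
    unfold r
    field_simp
    rw [hcs]
    linear_combination sinh (√(a ^ 2 + 1)) ^ 2 * hb2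
  simp only [id, Function.comp]
  rw [h1r]
  field_simp

lemma strictAntiOn_G : StrictAntiOn G (Set.Ioi 0) := by
  refine strictAntiOn_of_deriv_neg (convex_Ioi 0)
    (fun y hy => (hasDerivAt_G hy).continuousAt.continuousWithinAt) fun a ha => ?_
  rw [interior_Ioi] at ha
  have ha : 0 < a := ha
  rw [(hasDerivAt_G ha).deriv]
  refine div_neg_of_neg_of_pos (sub_neg.2 (lt_trans ?_ (artanh_gt (r_pos ha) (r_lt_one ha))))
    (by positivity)
  have hb := one_lt_b ha
  have hs : 0 < sinh (√(a ^ 2 + 1)) := sinh_pos_iff.2 (by linarith)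
  have hc := cosh_pos (√(a ^ 2 + 1))
  have hcs := cosh_sq (√(a ^ 2 + 1))
  have hb2 : √(a ^ 2 + 1) ^ 2 = a ^ 2 + 1 := Real.sq_sqrt (by positivity)
  have hk := key hb
  unfold r
  generalize √(a ^ 2 + 1) = b at *
  generalize sinh b = s at *
  generalize cosh b = c at *
  have hden : 3 * (b * c) ^ 2 - (a * s) ^ 2 = 3 * b ^ 2 + (2 * b ^ 2 + 1) * s ^ 2 := by
    linear_combination 3 * b ^ 2 * hcs + s ^ 2 * hb2
  have hb0 : 0 < b := by linarith
  have hD : 0 < 3 * b ^ 2 + (2 * b ^ 2 + 1) * s ^ 2 := by positivity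
  have e1 : 3 * (a * s / (b * c)) / (3 - (a * s / (b * c)) ^ 2)
      = 3 * a * s * b * c / (3 * b ^ 2 + (2 * b ^ 2 + 1) * s ^ 2) := by
    have : 3 - (a * s / (b * c)) ^ 2
        = (3 * b ^ 2 + (2 * b ^ 2 + 1) * s ^ 2) / (b * c) ^ 2 := by
      rw [← hden]; field_simp
    rw [this]
    field_simp
  have e2 : a * (s * c / b + a ^ 2) / (b ^ 2 + s ^ 2)
      = a * (s * c + (b ^ 2 - 1) * b) / (b * (b ^ 2 + s ^ 2)) := by
    rw [show a ^ 2 = b ^ 2 - 1 by linarith]; field_simp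
  rw [e1, e2, div_lt_div_iff₀ (by positivity) hD]
  have := mul_lt_mul_of_pos_left hk ha
  nlinarith

lemma tanh_div_anti : StrictAntiOn (fun x : ℝ => sinh x / (x * cosh x)) (Set.Ioi 0) := by
  have hd : ∀ x ∈ Set.Ioi (0 : ℝ), HasDerivAt (fun x : ℝ => sinh x / (x * cosh x))
      ((x - sinh x * cosh x) / (x * cosh x) ^ 2) x := by
    intro x hx
    have hx : 0 < x := hx
    have hc := cosh_pos x
    refine ((hasDerivAt_sinh x).div ((hasDerivAt_id x).mul (hasDerivAt_cosh x))
      (by simp only [id, Pi.mul_apply]; positivity)).congr_deriv ?_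
    simp only [id, Pi.mul_apply]
    congr 1
    linear_combination x * cosh_sq x
  refine strictAntiOn_of_deriv_neg (convex_Ioi 0)
    (fun y hy => (hd y hy).continuousAt.continuousWithinAt) fun x hx => ?_
  rw [interior_Ioi] at hx
  rw [(hd x hx).deriv]
  have hx : 0 < x := hx
  have hc := cosh_pos x
  have h1 : x < sinh x := self_lt_sinh_iff.2 hx
  have h2 : 1 ≤ cosh x := one_le_cosh x
  exact div_neg_of_neg_of_pos (by nlinarith) (by positivity)

lemma G_pos {a : ℝ} (ha : 0 < a) : 0 < G a := by
  unfold G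
  rw [artanh_eq (r_pos ha) (r_lt_one ha)]
  exact div_pos (Real.artanh_pos ⟨r_pos ha, r_lt_one ha⟩) ha

lemma G_lt_one {a : ℝ} (ha : 0 < a) : G a < 1 := by
  unfold G
  rw [artanh_eq (r_pos ha) (r_lt_one ha), div_lt_one ha]
  have hlt : r a < tanh a := by
    have hb := one_lt_b ha
    have h := mul_lt_mul_of_pos_left
      (tanh_div_anti (Set.mem_Ioi.2 ha) (Set.mem_Ioi.2 (by linarith)) (a_lt_b a)) ha
    have hc := cosh_pos a
    calc r a = a * (sinh (√(a ^ 2 + 1)) / (√(a ^ 2 + 1) * cosh (√(a ^ 2 + 1)))) := by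
          unfold r; ring
      _ < a * (sinh a / (a * cosh a)) := h
      _ = tanh a := by rw [tanh_eq_sinh_div_cosh]; field_simp
  calc Real.artanh (r a) < Real.artanh (tanh a) :=
        Real.artanh_lt_artanh (by linarith [r_pos ha]) (tanh_lt_one a) hlt
    _ = a := Real.artanh_tanh a

lemma G_le {a : ℝ} (ha : 1 ≤ a) : G a ≤ log (3 * a) / a := by
  have ha0 : 0 < a := by linarith
  have hb := one_lt_b ha0
  have hr0 := r_pos ha0
  have hr1 := r_lt_one ha0
  have hb2 : √(a ^ 2 + 1) ^ 2 = a ^ 2 + 1 := Real.sq_sqrt (by positivity)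
  have hab := a_lt_b a
  have hr := r_lt ha0
  unfold G
  refine div_le_div_of_nonneg_right ?_ ha0.le
  have h : (1 + r a) / (1 - r a) ≤ (3 * a) ^ 2 := by
    rw [div_le_iff₀ (by linarith)]
    generalize r a = ρ at *
    generalize √(a ^ 2 + 1) = b at *
    rw [lt_div_iff₀ (by linarith)] at hr
    -- `1 - ρ ≥ (b - a) / b = 1 / (b (a + b)) ≥ 1 / (2 b²) ≥ 1 / (4 a²)`
    have h1 : 1 ≤ (1 - ρ) * (2 * b ^ 2) := by
      nlinarith [mul_le_mul_of_nonneg_right hr.le (by linarith : 0 ≤ 2 * b)]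
    have h2 : (1 - ρ) * (2 * b ^ 2) ≤ (1 - ρ) * (4 * a ^ 2) :=
      mul_le_mul_of_nonneg_left (by nlinarith) (by linarith)
    nlinarith [mul_nonneg (sub_nonneg.2 hr1.le) (sq_nonneg a)]
  have hl := Real.log_le_log (div_pos (by linarith) (by linarith)) h
  rw [Real.log_pow] at hl
  push_cast at hl
  unfold _root_.artanh
  linarith

lemma tendsto_G : Filter.Tendsto G Filter.atTop (nhds 0) := by
  have h := (Real.tendsto_pow_log_div_mul_add_atTop (1 / 3) 0 1 (by norm_num)).comp
    (Filter.tendsto_id.const_mul_atTop (by norm_num : (0 : ℝ) < 3))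
  refine tendsto_of_tendsto_of_tendsto_of_le_of_le' tendsto_const_nhds h ?_ ?_
  · filter_upwards [Filter.eventually_gt_atTop 0] with a ha using (G_pos ha).le
  · filter_upwards [Filter.eventually_ge_atTop 1] with a ha
    refine (G_le ha).trans_eq ?_
    simp

lemma arg_eq {α : ℝ} (hα : 0 < α) :
    √α / (√(α + 1) * coth (√(α + 1))) = r (√α) := by
  unfold r coth
  rw [Real.sq_sqrt hα.le]
  have hb : 0 < √(α + 1) := Real.sqrt_pos.2 (by linarith)
  have hs : 0 < sinh (√(α + 1)) := sinh_pos_iff.2 hb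
  have hc := cosh_pos (√(α + 1))
  field_simp

end Stagnation


/-- The supremum `F(α₀) = 1 − θ₀⁻¹ artanh(θ₀/(θ₁ coth θ₁))` of the possible
stagnation levels of wave class 4 is well defined, lies in `(0,1)`, is strictly
increasing on `(0,∞)`, and tends to `1` as `α₀ → ∞`. -/
theorem stagnation_level_supremum (F : ℝ → ℝ)
    (hF : ∀ α₀ : ℝ, 0 < α₀ →
      F α₀ = 1 - (Real.sqrt α₀)⁻¹ *
        artanh (Real.sqrt α₀ / (Real.sqrt (α₀ + 1) * coth (Real.sqrt (α₀ + 1))))) :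
    (∀ α₀ : ℝ, 0 < α₀ →
      0 < Real.sqrt α₀ / (Real.sqrt (α₀ + 1) * coth (Real.sqrt (α₀ + 1))) ∧
      Real.sqrt α₀ / (Real.sqrt (α₀ + 1) * coth (Real.sqrt (α₀ + 1))) < 1) ∧
    (∀ α₀ : ℝ, 0 < α₀ → 0 < F α₀ ∧ F α₀ < 1) ∧
    StrictMonoOn F (Set.Ioi 0) ∧
    Filter.Tendsto F Filter.atTop (nhds 1) := by
  have hpos : ∀ α : ℝ, 0 < α → 0 < Real.sqrt α := fun α h => Real.sqrt_pos.2 h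
  have hFG : ∀ α : ℝ, 0 < α → F α = 1 - Stagnation.G (Real.sqrt α) := by
    intro α hα
    rw [hF α hα, Stagnation.arg_eq hα, Stagnation.G]
    ring
  refine ⟨fun α hα => ?_, fun α hα => ?_, fun x hx y hy hxy => ?_, ?_⟩
  · rw [Stagnation.arg_eq hα]
    exact ⟨Stagnation.r_pos (hpos α hα), Stagnation.r_lt_one (hpos α hα)⟩
  · rw [hFG α hα]
    constructor <;>
      linarith [Stagnation.G_pos (hpos α hα), Stagnation.G_lt_one (hpos α hα)]
  · rw [hFG x hx, hFG y hy]
    have := Stagnation.strictAntiOn_G (Set.mem_Ioi.2 (hpos x hx)) (Set.mem_Ioi.2 (hpos y hy))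
      (Real.sqrt_lt_sqrt (le_of_lt hx) hxy)
    linarith
  · have h := (Stagnation.tendsto_G.comp Real.tendsto_sqrt_atTop).const_sub 1
    rw [sub_zero] at h
    refine h.congr' ?_
    filter_upwards [Filter.eventually_gt_atTop 0] with α hα using (hFG α hα).symm
end

section
/- Let α₀ < −1, set θ₀ = √(−α₀) and θ₁ = √(−α₀−1), let a ≠ 0, λ ∈ ℝ, ε ≠ 0, define U₀(Y) = a·sin(θ₀(Y−1)+λ) and H(X,Y) = ε·cos X·sin(θ₁Y) + ∫₀^Y U₀(s) ds. Suppose Y_* ∈ ℝ satisfies U₀(Y_*) = 0 and sin(θ₁·Y_*) = 0. Then (π/2, Y_*) is a critical point of H (i.e. ∂ₓH(π/2,Y_*) = ∂_Y H(π/2,Y_*) = 0), the Hessian of H at (π/2, Y_*) is [[0, −ε·θ₁·cos(θ₁Y_*)], [−ε·θ₁·cos(θ₁Y_*), U₀′(Y_*)]], and its determinant equals −ε²·θ₁² < 0; hence (π/2, Y_*) is a nondegenerate saddle point of H. -/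
/-- The horizontal derivative of the Hamiltonian, for any background current `U`. -/
lemma pdX_hamiltonian (ε θ : ℝ) (U : ℝ → ℝ) :
    pdX (fun p => ε * Real.cos p.1 * Real.sin (θ * p.2) + ∫ s in (0:ℝ)..p.2, U s) =
      fun p => -ε * Real.sin p.1 * Real.sin (θ * p.2) := by
  funext p
  refine HasDerivAt.deriv ?_
  exact ((((Real.hasDerivAt_cos p.1).const_mul ε).mul_const (Real.sin (θ * p.2))).add_const
    (∫ s in (0:ℝ)..p.2, U s)).congr_deriv (by ring)

lemma hasDerivAt_sin_const_mul (θ y : ℝ) :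
    HasDerivAt (fun y => Real.sin (θ * y)) (θ * Real.cos (θ * y)) y := by
  exact ((hasDerivAt_id' y).const_mul θ).sin.congr_deriv (by ring)

/-- The vertical derivative of the Hamiltonian, for a continuous background current `U`. -/
lemma pdY_hamiltonian (ε θ : ℝ) (U : ℝ → ℝ) (hU : Continuous U) :
    pdY (fun p => ε * Real.cos p.1 * Real.sin (θ * p.2) + ∫ s in (0:ℝ)..p.2, U s) =
      fun p => ε * Real.cos p.1 * (θ * Real.cos (θ * p.2)) + U p.2 := by
  funext p
  exact (((hasDerivAt_sin_const_mul θ p.2).const_mul (ε * Real.cos p.1)).add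
    (hU.integral_hasStrictDerivAt 0 p.2).hasDerivAt).deriv

/-- When the background current `U₀` and `sin(θ₁·)` have a common zero `Y⋆`,
the point `(π/2, Y⋆)` is a critical point of the Hamiltonian `H` with Hessian
`[[0, −εθ₁cos(θ₁Y⋆)], [−εθ₁cos(θ₁Y⋆), U₀′(Y⋆)]]` of determinant
`−ε²θ₁² < 0`; hence it is a nondegenerate saddle point. -/
theorem saddle_point_common_zero (α₀ : ℝ) (hα : α₀ < -1)
    (θ₀ θ₁ : ℝ) (hθ₀ : θ₀ = Real.sqrt (-α₀)) (hθ₁ : θ₁ = Real.sqrt (-α₀ - 1))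
    (a lam ε : ℝ) (ha : a ≠ 0) (hε : ε ≠ 0)
    (U₀ : ℝ → ℝ) (hU₀ : U₀ = fun Y => a * Real.sin (θ₀ * (Y - 1) + lam))
    (H : ℝ × ℝ → ℝ)
    (hH : H = fun p => ε * Real.cos p.1 * Real.sin (θ₁ * p.2) + ∫ s in (0:ℝ)..p.2, U₀ s)
    (Ystar : ℝ) (hYstar : U₀ Ystar = 0) (hYstar' : Real.sin (θ₁ * Ystar) = 0) :
    pdX H (Real.pi / 2, Ystar) = 0 ∧ pdY H (Real.pi / 2, Ystar) = 0 ∧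
    (!![pdX (pdX H) (Real.pi / 2, Ystar), pdY (pdX H) (Real.pi / 2, Ystar);
        pdX (pdY H) (Real.pi / 2, Ystar), pdY (pdY H) (Real.pi / 2, Ystar)] =
      !![0, -ε * θ₁ * Real.cos (θ₁ * Ystar);
         -ε * θ₁ * Real.cos (θ₁ * Ystar), deriv U₀ Ystar]) ∧
    (!![pdX (pdX H) (Real.pi / 2, Ystar), pdY (pdX H) (Real.pi / 2, Ystar);
        pdX (pdY H) (Real.pi / 2, Ystar), pdY (pdY H) (Real.pi / 2, Ystar)]).det =
      -ε ^ 2 * θ₁ ^ 2 ∧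
    -ε ^ 2 * θ₁ ^ 2 < 0 := by
  have hc : Continuous U₀ := by rw [hU₀]; fun_prop
  have hX : pdX H = fun p => -ε * Real.sin p.1 * Real.sin (θ₁ * p.2) := by
    rw [hH]; exact pdX_hamiltonian ε θ₁ U₀
  have hY : pdY H = fun p => ε * Real.cos p.1 * (θ₁ * Real.cos (θ₁ * p.2)) + U₀ p.2 := by
    rw [hH]; exact pdY_hamiltonian ε θ₁ U₀ hc
  have hθpos : 0 < θ₁ := by rw [hθ₁]; exact Real.sqrt_pos.2 (by linarith)
  have hcos : Real.cos (θ₁ * Ystar) ^ 2 = 1 := by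
    have := Real.sin_sq_add_cos_sq (θ₁ * Ystar)
    rw [hYstar'] at this
    linarith
  have hXX : pdX (pdX H) (Real.pi / 2, Ystar) = 0 := by
    rw [hX]; simp [pdX, hYstar']
  have hYX : pdY (pdX H) (Real.pi / 2, Ystar) = -ε * θ₁ * Real.cos (θ₁ * Ystar) := by
    rw [hX]
    refine HasDerivAt.deriv ?_
    exact ((hasDerivAt_sin_const_mul θ₁ Ystar).const_mul
      (-ε * Real.sin (Real.pi / 2))).congr_deriv (by rw [Real.sin_pi_div_two]; ring)
  have hXY : pdX (pdY H) (Real.pi / 2, Ystar) = -ε * θ₁ * Real.cos (θ₁ * Ystar) := by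
    rw [hY]
    refine HasDerivAt.deriv ?_
    exact ((((Real.hasDerivAt_cos (Real.pi / 2)).const_mul ε).mul_const
      (θ₁ * Real.cos (θ₁ * Ystar))).add_const (U₀ Ystar)).congr_deriv
      (by rw [Real.sin_pi_div_two]; ring)
  -- The wave part of `∂_Y H` vanishes identically on the line `X = π/2`.
  have hYY : pdY (pdY H) (Real.pi / 2, Ystar) = deriv U₀ Ystar := by
    rw [hY]; simp [pdY]
  refine ⟨by simp [hX, hYstar'], by simp [hY, hYstar], by rw [hXX, hYX, hXY, hYY], ?_, ?_⟩
  · rw [hXX, hYX, hXY, hYY, Matrix.det_fin_two_of]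
    linear_combination (-ε ^ 2 * θ₁ ^ 2) * hcos
  · have : 0 < ε ^ 2 * θ₁ ^ 2 := by positivity
    linarith
end

section
/- Let α₀ < −1, set θ₀ = √(−α₀) and θ₁ = √(−α₀−1), let a ≠ 0 and λ ∈ ℝ, define U₀(Y) = a·sin(θ₀(Y−1)+λ), and let Y_* ∈ ℝ satisfy U₀(Y_*) = 0. Then there exist ε₀ > 0 and C > 0 such that for every ε with 0 < ε < ε₀ there is a continuously differentiable, 2π-periodic function Y_∞ : ℝ → ℝ satisfying U₀(Y_∞(X)) + ε·θ₁·cos X·cos(θ₁·Y_∞(X)) = 0 and |Y_∞(X) − Y_*| ≤ C·ε for all X ∈ ℝ. -/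
/-!
The amplitude `ε` and the phase `X` enter the equation `U = 0` only through the single parameter
`t = ε cos X`, so it suffices to solve `U₀(Y) + t θ₁ cos(θ₁ Y) = 0` for `Y = ψ(t)` near `t = 0`.
At a zero of `sin` the cosine does not vanish, so `U₀'(Y⋆) = a θ₀ cos(θ₀ (Y⋆ - 1) + λ) ≠ 0`, and
the implicit function theorem (`exists_local_solution`) gives such a `C¹` branch `ψ` with
`|ψ(t) - Y⋆| ≤ C |t|`. Then `Y∞(X) = ψ(ε cos X)` is `C¹` and `2π`-periodic, and
`|ψ(ε cos X) - Y⋆| ≤ C ε` since `|cos X| ≤ 1`.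
-/

open Filter Topology

/-- A scalar implicit function theorem on a symmetric interval of the parameter: if `f (0, y₀) = 0`
and the partial derivative `c` of `f` in its second variable is nonzero there, then `f (t, y) = 0`
has a `C¹` solution branch `y = ψ t` with `|ψ t - y₀| = O(|t|)`. -/
lemma exists_local_solution (f : ℝ × ℝ → ℝ) (hf : ContDiff ℝ 1 f) (y₀ c : ℝ)
    (h0 : f (0, y₀) = 0) (hc : c ≠ 0) (hd : HasDerivAt (fun y => f (0, y)) c y₀) :
    ∃ ψ : ℝ → ℝ, ∃ δ > (0 : ℝ), ∃ C > (0 : ℝ), ∀ t : ℝ, |t| < δ →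
      ContDiffAt ℝ 1 ψ t ∧ f (t, ψ t) = 0 ∧ |ψ t - y₀| ≤ C * |t| := by
  have cdf : ContDiffAt ℝ 1 f (0, y₀) := hf.contDiffAt
  have hF : HasFDerivAt f (fderiv ℝ f (0, y₀)) (0, y₀) :=
    (cdf.differentiableAt one_ne_zero).hasFDerivAt
  have hinr : fderiv ℝ f (0, y₀) ∘L .inr ℝ ℝ ℝ = ContinuousLinearMap.toSpanSingleton ℝ c :=
    (hF.comp y₀ (hasFDerivAt_prodMk_right 0 y₀)).unique hd.hasFDerivAt
  have hinv : (fderiv ℝ f (0, y₀) ∘L .inr ℝ ℝ ℝ).IsInvertible := by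
    refine ⟨ContinuousLinearEquiv.unitsEquivAut ℝ (Units.mk0 c hc), ?_⟩
    rw [hinr]
    ext
    simp
  have hψ0 := cdf.implicitFunction_apply_self one_ne_zero hinv
  have hsol := cdf.eventually_apply_implicitFunction one_ne_zero hinv
  have hψC := cdf.contDiffAt_implicitFunction one_ne_zero hinv
  set ψ := cdf.implicitFunction one_ne_zero hinv
  simp only [h0] at hψ0 hsol hψC
  obtain ⟨C, hC, hbound⟩ :=
    (hψC.differentiableAt one_ne_zero).hasFDerivAt.isBigO_sub.exists_pos
  obtain ⟨δ, hδ, hball⟩ := Metric.eventually_nhds_iff.mp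
    ((hψC.eventually (by simp)).and (hsol.and hbound.bound))
  refine ⟨ψ, δ, hδ, C, hC, fun t ht => ?_⟩
  obtain ⟨h1, h2, h3⟩ := hball (y := t) (by simpa using ht)
  exact ⟨h1, h2, by simpa [hψ0] using h3⟩

/-- Near each zero `Y⋆` of the background current of wave class 1, for small
amplitude `ε` the ∞-isocline `{U = 0}` is the graph of a `C¹`, `2π`-periodic
function `Y∞` lying within distance `O(ε)` of the level `Y⋆`. -/
theorem infinity_isocline (α₀ : ℝ) (hα : α₀ < -1)
    (θ₀ θ₁ : ℝ) (hθ₀ : θ₀ = Real.sqrt (-α₀)) (hθ₁ : θ₁ = Real.sqrt (-α₀ - 1))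
    (a lam : ℝ) (ha : a ≠ 0)
    (U₀ : ℝ → ℝ) (hU₀ : U₀ = fun Y => a * Real.sin (θ₀ * (Y - 1) + lam))
    (Ystar : ℝ) (hYstar : U₀ Ystar = 0) :
    ∃ ε₀ > (0:ℝ), ∃ C > (0:ℝ), ∀ ε : ℝ, 0 < ε → ε < ε₀ →
      ∃ Yinf : ℝ → ℝ, ContDiff ℝ 1 Yinf ∧
        Function.Periodic Yinf (2 * Real.pi) ∧
        ∀ X : ℝ,
          U₀ (Yinf X) + ε * θ₁ * Real.cos X * Real.cos (θ₁ * Yinf X) = 0 ∧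
          |Yinf X - Ystar| ≤ C * ε := by
  subst hU₀
  have hθ₀pos : 0 < θ₀ := hθ₀ ▸ Real.sqrt_pos.mpr (by linarith)
  have hsin : Real.sin (θ₀ * (Ystar - 1) + lam) = 0 := by simpa [ha] using hYstar
  have hcos : Real.cos (θ₀ * (Ystar - 1) + lam) ≠ 0 := by
    intro h
    have := Real.sin_sq_add_cos_sq (θ₀ * (Ystar - 1) + lam)
    simp [hsin, h] at this
  obtain ⟨ψ, δ, hδ, C, hC, H⟩ := exists_local_solution
    (fun p => a * Real.sin (θ₀ * (p.2 - 1) + lam) + p.1 * θ₁ * Real.cos (θ₁ * p.2))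
    (by fun_prop) Ystar (a * (Real.cos (θ₀ * (Ystar - 1) + lam) * θ₀))
    (by simp [hsin]) (mul_ne_zero ha (mul_ne_zero hcos hθ₀pos.ne')) (by
      have hlin : HasDerivAt (fun y : ℝ => θ₀ * (y - 1) + lam) θ₀ Ystar := by
        simpa using (((hasDerivAt_id Ystar).sub_const 1).const_mul θ₀).add_const lam
      simpa using hlin.sin.const_mul a)
  refine ⟨δ, hδ, C, hC, fun ε hε hεδ => ⟨fun X => ψ (ε * Real.cos X), ?_, ?_, fun X => ?_⟩⟩
  all_goals
    have hle : ∀ X : ℝ, |ε * Real.cos X| ≤ ε := fun X => by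
      rw [abs_mul, abs_of_pos hε]
      exact mul_le_of_le_one_right hε.le (Real.abs_cos_le_one X)
  · rw [contDiff_iff_contDiffAt]
    intro X
    exact (H _ ((hle X).trans_lt hεδ)).1.comp X (by fun_prop)
  · intro X
    simp only [Real.cos_add_two_pi]
  · obtain ⟨-, h2, h3⟩ := H _ ((hle X).trans_lt hεδ)
    refine ⟨?_, h3.trans (mul_le_mul_of_nonneg_left (hle X) hC.le)⟩
    simp only at h2 ⊢
    linear_combination h2
end
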